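/- There exists a computable enumeration without repetitions (ψ_x) of all unary partial computable functions such that ψ_{2x+1}(y) = x for all x, y ∈ ω. -/

import Mathlib

/-!
The constant functions occupy the odd indices, so it remains to enumerate the nonconstant partial
computable functions injectively on the even ones. Those that are total and eventually constant have
canonical names `(L, k, d)`: the list of values `L ++ [k]` followed by `d ≠ k` forever. The others
have a uniformly computable numbering, possibly with repetitions, by rows `φ i`.

As in Friedberg's construction, followers copy the rows. Row `i` gets a new follower, and its
previous one dies, at each stage at which its agreement with some earlier row reaches a new record.
If row `i` repeats an earlier row there are infinitely many records and every follower dies;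
otherwise there are finitely many and exactly the last follower survives. So each function given by
a row has exactly one surviving follower. A dying follower turns into a total eventually constant
function, whose canonical name must then be left out. Both the follower and its stage of death are
coded into the length of the list in that name, so left-out names are recognised computably and no
priority among followers is needed.
-/

namespace FriedbergNumbering

open Nat.Partrec (Code)
open Nat.Partrec.Code Encodable Filter

section ComputableEnumeration

theorem computable_count {p : ℕ → Prop} [DecidablePred p] (hp : ComputablePred p) :
    Computable (Nat.count p) := by
  have hrec : Computable fun n : ℕ => Nat.rec (motive := fun _ => ℕ) 0
      (fun m c => bif decide (p m) then c + 1 else c) n :=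
    Computable.nat_rec Computable.id (Computable.const 0)
      (Computable.cond (hp.decide.comp (Computable.fst.comp Computable.snd))
        (Computable.succ.comp (Computable.snd.comp Computable.snd))
        (Computable.snd.comp Computable.snd)).to₂
  refine hrec.of_eq fun n => ?_
  induction n with
  | zero => rfl
  | succ n ih => by_cases hpn : p n <;> simp [Nat.count_succ, ih, hpn]

theorem computable_nth {p : ℕ → Prop} (hp : ComputablePred p)
    (hinf : (Set.ofPred p).Infinite) : Computable (Nat.nth p) := by
  obtain ⟨_, -⟩ := id hp
  have hle (k n : ℕ) : k < Nat.count p (n + 1) ↔ Nat.nth p k ≤ n := by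
    rw [← not_le, Nat.count_le_iff_le_nth hinf, Nat.add_one_le_iff, not_lt]
  have hlt : ComputablePred fun q : ℕ × ℕ => q.1 < Nat.count p (q.2 + 1) :=
    Computable.computablePred <| Primrec.nat_lt.decide.to_comp.comp Computable.fst
      ((computable_count hp).comp (Computable.succ.comp Computable.snd))
  refine (Computable.find (P := fun k n => k < Nat.count p (n + 1)) hlt
    fun k => ⟨_, (hle k _).2 le_rfl⟩).of_eq fun k => ?_
  simp [Nat.find_eq_iff, hle]

theorem exists_computable_bijective (α : Type*) [Primcodable α] [Infinite α] :
    ∃ e : ℕ → α, Computable e ∧ Function.Bijective e := by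
  let p : ℕ → Prop := (· ∈ Set.range (encode : α → ℕ))
  have hinf : (Set.ofPred p).Infinite := Set.infinite_range_of_injective encode_injective
  choose e he using Nat.nth_mem_of_infinite hinf
  refine ⟨e, ?_, fun k l hkl => ?_, fun a => ?_⟩
  · rw [← Computable.encode_iff]
    exact (computable_nth Primcodable.mem_range_encode.computablePred hinf).of_eq
      fun k => (he k).symm
  · exact Nat.nth_injective hinf (by rw [← he, ← he, hkl])
  · obtain ⟨k, hk⟩ := (Nat.range_nth_of_infinite hinf).ge ⟨a, rfl⟩
    exact ⟨k, encode_injective ((he k).trans hk)⟩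

end ComputableEnumeration

section Interleave

variable {β γ : Type*}

/-- The numbering listing `μ` at the even indices and `κ` at the odd ones, which is how `ℕ ⊕ ℕ` is
coded. -/
def interleave (μ κ : ℕ → β →. γ) (n : ℕ) : β →. γ :=
  Sum.elim μ κ (Denumerable.ofNat (ℕ ⊕ ℕ) n)

theorem interleave_odd (μ κ : ℕ → β →. γ) (n : ℕ) : interleave μ κ (2 * n + 1) = κ n := by
  have hn : 2 * n + 1 = encode (Sum.inr n : ℕ ⊕ ℕ) := rfl
  rw [interleave, hn, Denumerable.ofNat_encode, Sum.elim_inr]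

theorem partrec₂_interleave [Primcodable β] [Primcodable γ] {μ κ : ℕ → β →. γ}
    (hμ : Partrec₂ μ) (hκ : Partrec₂ κ) : Partrec₂ (interleave μ κ) := by
  have hy : Computable fun a : (ℕ × β) × ℕ => a.1.2 := Computable.snd.comp Computable.fst
  refine (Partrec.sumCasesOn ((Computable.ofNat (ℕ ⊕ ℕ)).comp Computable.fst)
    (hμ.comp Computable.snd hy).to₂ (hκ.comp Computable.snd hy).to₂).of_eq fun a => ?_
  rw [interleave]
  cases Denumerable.ofNat (ℕ ⊕ ℕ) a.1 <;> rfl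

theorem interleave_injective {μ κ : ℕ → β →. γ} (hμ : Function.Injective μ)
    (hκ : Function.Injective κ) (hne : ∀ m n, μ m ≠ κ n) :
    Function.Injective (interleave μ κ) :=
  (hμ.sumElim hκ hne).comp (Denumerable.eqv (ℕ ⊕ ℕ)).symm.injective

theorem range_interleave (μ κ : ℕ → β →. γ) :
    Set.range (interleave μ κ) = Set.range μ ∪ Set.range κ :=
  ((Denumerable.eqv (ℕ ⊕ ℕ)).symm.surjective.range_comp _).trans (Set.Sum.elim_range μ κ)

end Interleave

section EventuallyConstant

variable {α : Type*}

/-- The sequence listing `L` and continuing with the constant value `d`. Every nonconstant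
eventually constant sequence is uniquely `extendByConst (L ++ [k]) d` with `k ≠ d`. -/
def extendByConst (L : List α) (d : α) (x : ℕ) : α :=
  L.getD x d

theorem extendByConst_of_length_le {L : List α} {x : ℕ} (hx : L.length ≤ x) (d : α) :
    extendByConst L d x = d :=
  List.getD_eq_default _ _ hx

theorem eventuallyConst_extendByConst (L : List α) (d : α) :
    EventuallyConst (extendByConst L d) atTop :=
  eventuallyConst_atTop.2 ⟨L.length, fun _ hx => by
    rw [extendByConst_of_length_le hx, extendByConst_of_length_le le_rfl]⟩

theorem isGreatest_length_extendByConst_ne {L : List α} {k d : α} (hk : k ≠ d) :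
    IsGreatest {x | extendByConst (L ++ [k]) d x ≠ d} L.length := by
  constructor
  · simpa [extendByConst] using hk
  · intro x hx
    by_contra! hlt
    exact hx (extendByConst_of_length_le (by simpa using hlt) d)

theorem extendByConst_append_ne_const {L : List α} {k d : α} (hk : k ≠ d) (e : α) :
    extendByConst (L ++ [k]) d ≠ fun _ => e := by
  intro h
  have hlast := (isGreatest_length_extendByConst_ne (L := L) hk).1
  have hlim := extendByConst_of_length_le (le_refl (L ++ [k]).length) d
  rw [h] at hlast hlim
  exact hlast hlim

theorem eq_of_extendByConst_append_eq {L L' : List α} {k k' d d' : α} (hk : k ≠ d)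
    (hk' : k' ≠ d') (h : extendByConst (L ++ [k]) d = extendByConst (L' ++ [k']) d') :
    (L, k, d) = (L', k', d') := by
  obtain rfl : d = d' := by
    let n := max (L ++ [k]).length (L' ++ [k']).length
    rw [← extendByConst_of_length_le (le_max_left _ _ : _ ≤ n) d, h,
      extendByConst_of_length_le (le_max_right _ _)]
  have hlen : L.length = L'.length :=
    (isGreatest_length_extendByConst_ne hk).unique
      (h ▸ isGreatest_length_extendByConst_ne hk')
  have happend : L ++ [k] = L' ++ [k'] := by
    refine List.ext_getElem (by simp [hlen]) fun x hx hx' => ?_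
    simpa only [extendByConst, List.getD_eq_getElem _ _ hx, List.getD_eq_getElem _ _ hx']
      using congrFun h x
  obtain ⟨rfl, hkk'⟩ := List.append_inj happend hlen
  rw [List.singleton_inj.1 hkk']

theorem exists_eq_extendByConst_append {g : ℕ → α} (hg : EventuallyConst g atTop) :
    (∃ d, g = fun _ => d) ∨ ∃ L k d, k ≠ d ∧ g = extendByConst (L ++ [k]) d := by
  classical
  rw [eventuallyConst_atTop_nat] at hg
  obtain ⟨n, hn, hmin⟩ : ∃ n, (∀ m, n ≤ m → g (m + 1) = g m) ∧
      ∀ n' < n, ¬ ∀ m, n' ≤ m → g (m + 1) = g m :=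
    ⟨Nat.find hg, Nat.find_spec hg, fun _ => Nat.find_min hg⟩
  have hconst (m : ℕ) (hm : n ≤ m) : g m = g n := by
    induction m, hm using Nat.le_induction with
    | base => rfl
    | succ m hm ih => rw [hn m hm, ih]
  rcases n with _ | n
  · exact .inl ⟨g 0, funext fun m => hconst m (Nat.zero_le m)⟩
  · refine .inr ⟨(List.range n).map g, g n, g (n + 1), fun hlast => ?_, funext fun x => ?_⟩
    · refine hmin n n.lt_succ_self fun m hm => ?_
      rcases hm.eq_or_lt with rfl | hm
      exacts [hlast.symm, hn m hm]
    · have hL : (List.range n).map g ++ [g n] = (List.range (n + 1)).map g := by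
        simp [List.range_succ]
      rw [hL]
      rcases lt_or_ge x (n + 1) with hx | hx
      · simp [extendByConst, hx]
      · rw [hconst x hx, extendByConst_of_length_le (by simpa using hx)]

theorem primrec_extendByConst [Primcodable α] :
    Primrec fun q : (List α × α) × ℕ => extendByConst q.1.1 q.1.2 q.2 :=
  (Primrec.option_getD.comp
    (Primrec.list_getElem?.comp (Primrec.fst.comp Primrec.fst) Primrec.snd)
    (Primrec.snd.comp Primrec.fst)).of_eq fun _ => List.getD_eq_getElem?_getD.symm

end EventuallyConstant

section NonEventuallyConstant

variable {α : Type*}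

/-- The partial function `f` is total and eventually constant. -/
def TotalEventuallyConst (f : ℕ →. α) : Prop :=
  ∃ g : ℕ → α, f = g ∧ EventuallyConst g atTop

/-- The restriction of `f` to the complement of `{z}`. It is never total, and it is `f` itself if
`f` is undefined at `z`. -/
def puncture (f : ℕ →. α) (z : ℕ) : ℕ →. α := fun x => if x = z then Part.none else f x

/-- The restriction of `f` to those `x` for which a search through `y = x, x + 1, ...` finds
`f y ≠ f (y + 1)`. The search diverges when it meets a point at which `f` is undefined. The result
is never total and eventually constant, and it is `f` itself if `f` is total but not eventually
constant. -/
def belowChange [DecidableEq α] (f : ℕ →. α) : ℕ →. α := fun x =>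
  (Nat.rfind fun n => (f (x + n)).bind fun a => (f (x + n + 1)).map fun b => decide (a ≠ b)).bind
    fun _ => f x

theorem totalEventuallyConst_extendByConst (L : List α) (d : α) :
    TotalEventuallyConst (PFun.lift (extendByConst L d)) :=
  ⟨_, rfl, eventuallyConst_extendByConst L d⟩

theorem not_totalEventuallyConst_puncture (f : ℕ →. α) (z : ℕ) :
    ¬ TotalEventuallyConst (puncture f z) := by
  rintro ⟨g, hg, -⟩
  simpa [puncture] using congrFun hg z

theorem exists_change_of_mem_belowChange [DecidableEq α] {f : ℕ →. α} {x : ℕ} {v : α}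
    (hv : v ∈ belowChange f x) : v ∈ f x ∧ ∃ y ≥ x, ∃ a ∈ f y, ∃ b ∈ f (y + 1), a ≠ b := by
  obtain ⟨n, hn, hv⟩ := Part.mem_bind_iff.1 hv
  obtain ⟨a, ha, hab⟩ := Part.mem_bind_iff.1 (Nat.rfind_spec hn)
  obtain ⟨b, hb, hab⟩ := (Part.mem_map_iff _).1 hab
  exact ⟨hv, x + n, Nat.le_add_right x n, a, ha, b, hb, of_decide_eq_true hab⟩

theorem not_totalEventuallyConst_belowChange [DecidableEq α] (f : ℕ →. α) :
    ¬ TotalEventuallyConst (belowChange f) := by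
  rintro ⟨g, hg, hconst⟩
  obtain ⟨N, hN⟩ := eventuallyConst_atTop_nat.1 hconst
  have hmem (x : ℕ) : g x ∈ belowChange f x := by simp [hg]
  obtain ⟨-, y, hy, a, ha, b, hb, hab⟩ := exists_change_of_mem_belowChange (hmem N)
  have ha' := Part.mem_unique ha (exists_change_of_mem_belowChange (hmem y)).1
  have hb' := Part.mem_unique hb (exists_change_of_mem_belowChange (hmem (y + 1))).1
  exact hab (ha'.trans ((hN y hy).symm.trans hb'.symm))

theorem puncture_eq_self {f : ℕ →. α} {z : ℕ} (hz : f z = Part.none) : puncture f z = f := by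
  funext x
  rw [puncture]
  split_ifs with hx
  · rw [hx, hz]
  · rfl

theorem belowChange_coe_eq_self [DecidableEq α] {g : ℕ → α} (hg : ¬ EventuallyConst g atTop) :
    belowChange (g : ℕ →. α) = g := by
  funext x
  obtain ⟨y, hxy, hy⟩ : ∃ y ≥ x, g (y + 1) ≠ g y := by
    simpa only [eventuallyConst_atTop_nat, not_exists, not_forall, exists_prop] using
      not_exists.1 (mt eventuallyConst_atTop_nat.2 hg) x
  obtain ⟨n, hn, -⟩ := Nat.rfind_min' (p := fun n => decide (g (x + n) ≠ g (x + n + 1)))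
    (m := y - x) (by simpa [Nat.add_sub_cancel' hxy] using hy.symm)
  refine Part.eq_some_iff.2 (Part.mem_bind_iff.2 ⟨n, ?_, Part.mem_some _⟩)
  simp only [PFun.coe_val, Part.bind_some, Part.map_some]
  exact hn

theorem exists_puncture_eq_or_belowChange_eq [DecidableEq α] {f : ℕ →. α}
    (hf : ¬ TotalEventuallyConst f) : (∃ z, puncture f z = f) ∨ belowChange f = f := by
  by_cases hdom : ∃ z, f z = Part.none
  · obtain ⟨z, hz⟩ := hdom
    exact .inl ⟨z, puncture_eq_self hz⟩
  · push Not at hdom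
    choose g hg using fun x => Part.ne_none_iff.1 (hdom x)
    obtain rfl : f = g := funext hg
    exact .inr (belowChange_coe_eq_self fun hconst => hf ⟨g, rfl, hconst⟩)

theorem partrec_puncture_eval :
    Partrec fun a : (Code × ℕ) × ℕ => puncture (eval a.1.1) a.1.2 a.2 := by
  have hz : Computable fun a : (Code × ℕ) × ℕ => decide (a.2 = a.1.2) :=
    (Primrec.eq.decide.comp Primrec.snd (Primrec.snd.comp Primrec.fst)).to_comp
  refine (Partrec.cond hz Partrec.none
    (eval_part.comp (Computable.fst.comp Computable.fst) Computable.snd)).of_eq fun a => ?_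
  by_cases ha : a.2 = a.1.2 <;> simp [puncture, ha]

theorem partrec₂_belowChange_eval : Partrec₂ fun c : Code => belowChange (eval c) := by
  have hc : Computable fun a : (Code × ℕ) × ℕ => a.1.1 := Computable.fst.comp Computable.fst
  have hy : Computable fun a : (Code × ℕ) × ℕ => a.1.2 + a.2 :=
    (Primrec.nat_add.comp (Primrec.snd.comp Primrec.fst) Primrec.snd).to_comp
  have hne : Computable fun a : (((Code × ℕ) × ℕ) × ℕ) × ℕ => decide (a.1.2 ≠ a.2) :=
    (Primrec.eq.comp (Primrec.snd.comp Primrec.fst) Primrec.snd).not.decide.to_comp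
  have hsearch : Partrec₂ fun (a : Code × ℕ) (n : ℕ) => (eval a.1 (a.2 + n)).bind fun u =>
      (eval a.1 (a.2 + n + 1)).map fun v => decide (u ≠ v) :=
    (eval_part.comp hc hy).bind <| Partrec.map
      (eval_part.comp (hc.comp Computable.fst) (Computable.succ.comp (hy.comp Computable.fst)))
      hne.to₂
  exact (Partrec.rfind hsearch).bind (eval_part.comp hc (Computable.snd.comp Computable.fst))

theorem exists_primrec_eval_eq {F : ℕ → ℕ →. ℕ} (hF : Partrec₂ F) :
    ∃ φ : ℕ → Code, Primrec φ ∧ ∀ i, eval (φ i) = F i := by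
  obtain ⟨c, hc⟩ := exists_code.1 (Partrec₂.unpaired'.2 hF)
  refine ⟨curry c, primrec₂_curry.comp (Primrec.const c) Primrec.id, fun i => funext fun x => ?_⟩
  simp [eval_curry, hc]

theorem exists_primrec_codes_not_totalEventuallyConst :
    ∃ φ : ℕ → Code, Primrec φ ∧ (∀ i, ¬ TotalEventuallyConst (eval (φ i))) ∧
      ∀ f : ℕ →. ℕ, Partrec f → ¬ TotalEventuallyConst f → ∃ i, eval (φ i) = f := by
  let F : Code ⊕ (Code × ℕ) → ℕ →. ℕ :=
    Sum.elim (fun c => belowChange (eval c)) fun q => puncture (eval q.1) q.2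
  have hF : Partrec₂ fun i => F (Denumerable.ofNat _ i) := by
    have hx : Computable fun a : (ℕ × ℕ) × Code => a.1.2 := Computable.snd.comp Computable.fst
    have hx' : Computable fun a : (ℕ × ℕ) × Code × ℕ => a.1.2 :=
      Computable.snd.comp Computable.fst
    refine (Partrec.sumCasesOn ((Computable.ofNat (Code ⊕ (Code × ℕ))).comp Computable.fst)
      (partrec₂_belowChange_eval.comp Computable.snd hx).to₂
      (partrec_puncture_eval.comp (Computable.snd.pair hx')).to₂).of_eq fun a => ?_
    cases h : Denumerable.ofNat (Code ⊕ (Code × ℕ)) a.1 <;> simp only [F, h, Sum.elim_inl,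
      Sum.elim_inr]
  obtain ⟨φ, hφ, heval⟩ := exists_primrec_eval_eq hF
  refine ⟨φ, hφ, fun i => ?_, fun f hf hconst => ?_⟩
  · rw [heval]
    rcases Denumerable.ofNat (Code ⊕ (Code × ℕ)) i with c | ⟨c, z⟩
    exacts [not_totalEventuallyConst_belowChange _, not_totalEventuallyConst_puncture _ _]
  · obtain ⟨c, rfl⟩ := exists_code.1 (Partrec.nat_iff.1 hf)
    obtain ⟨s, hs⟩ : ∃ s, F s = eval c := by
      rcases exists_puncture_eq_or_belowChange_eq hconst with ⟨z, hz⟩ | h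
      exacts [⟨.inr (c, z), hz⟩, ⟨.inl c, h⟩]
    exact ⟨encode s, by rw [heval, Denumerable.ofNat_encode, hs]⟩

end NonEventuallyConstant

section SearchAndApproximation

variable {α : Type*}

theorem primrecRel_exists_lt [Primcodable α] {R : ℕ → α → Prop} (hR : PrimrecRel R) :
    PrimrecRel fun n a => ∃ x < n, R x a :=
  (hR.exists_mem_list.comp (Primrec.list_range.comp Primrec.fst) Primrec.snd).of_eq
    fun _ => by simp only [List.mem_range]

theorem primrecRel_forall_lt [Primcodable α] {R : ℕ → α → Prop} (hR : PrimrecRel R) :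
    PrimrecRel fun n a => ∀ x < n, R x a :=
  (hR.forall_mem_list.comp (Primrec.list_range.comp Primrec.fst) Primrec.snd).of_eq
    fun _ => by simp only [List.mem_range]

theorem exists_mem_rfindOpt_of_isSome {f : ℕ → Option α} {m : ℕ} (hm : (f m).isSome) :
    ∃ n ≤ m, ∃ a ∈ f n, a ∈ Nat.rfindOpt f := by
  obtain ⟨n, hn, hnm⟩ := Nat.rfind_min' (p := fun n => (f n).isSome) hm
  obtain ⟨a, ha⟩ := Option.isSome_iff_exists.1 (Part.mem_some_iff.1 (Nat.rfind_spec hn)).symm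
  exact ⟨n, hnm, a, ha, Part.mem_bind_iff.2 ⟨n, hn, by simp [ha]⟩⟩

theorem eventually_mem_evaln_iff (c : Code) (x : ℕ) :
    ∀ᶠ s in atTop, ∀ v, v ∈ evaln s c x ↔ v ∈ eval c x := by
  rcases (eval c x).eq_none_or_eq_some with h | ⟨v, h⟩
  · refine .of_forall fun s v => ⟨evaln_sound, fun hv => ?_⟩
    exact absurd (h ▸ hv) (Part.notMem_none v)
  · obtain ⟨s, hs⟩ := evaln_complete.1 (Part.eq_some_iff.1 h)
    filter_upwards [eventually_ge_atTop s] with r hr w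
    refine ⟨evaln_sound, fun hw => ?_⟩
    obtain rfl := Part.mem_unique hw (Part.eq_some_iff.1 h)
    exact evaln_mono hr hs

theorem eventually_evaln_eq {c c' : Code} {x : ℕ} (h : eval c x = eval c' x) :
    ∀ᶠ s in atTop, evaln s c x = evaln s c' x := by
  filter_upwards [eventually_mem_evaln_iff c x, eventually_mem_evaln_iff c' x] with s hs hs'
  exact Option.ext fun v => by rw [← Option.mem_def, ← Option.mem_def, hs, hs', h]

theorem eventually_evaln_ne {c c' : Code} {x : ℕ} (h : eval c x ≠ eval c' x) :
    ∀ᶠ s in atTop, evaln s c x ≠ evaln s c' x := by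
  filter_upwards [eventually_mem_evaln_iff c x, eventually_mem_evaln_iff c' x] with s hs hs' heq
  exact h (Part.ext fun v => by rw [← hs, ← hs', heq])

theorem exists_last_record [LinearOrder α] {u : ℕ → α} (hmax : ∃ t, ∀ s, u s ≤ u t) :
    ∃ t, (∀ r < t, u r < u t) ∧ ∀ s > t, ¬ ∀ r < s, u r < u s := by
  classical
  refine ⟨Nat.find hmax, fun r hr => ?_, fun s hs hrec => ?_⟩
  · obtain ⟨s, hs⟩ := not_forall.1 (Nat.find_min hmax hr)
    exact (not_le.1 hs).trans_le (Nat.find_spec hmax s)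
  · exact (hrec _ hs).not_ge (Nat.find_spec hmax s)

end SearchAndApproximation

section Restarts

variable (φ : ℕ → Code)

/-- The largest `n ≤ s` such that, as far as `s` steps of computation show, row `i` agrees below
`n` with one of the earlier rows. -/
def matchLen (i s : ℕ) : ℕ :=
  Nat.findGreatest (fun n => ∃ j < i, ∀ x < n, evaln s (φ j) x = evaln s (φ i) x) s

/-- Row `i` restarts at the stages at which `matchLen φ i` takes a new record value. -/
def Restarts (i s : ℕ) : Prop :=
  ∀ r < s, matchLen φ i r < matchLen φ i s

instance (i s : ℕ) : Decidable (Restarts φ i s) :=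
  inferInstanceAs (Decidable (∀ r < s, matchLen φ i r < matchLen φ i s))

variable {φ}

theorem tendsto_matchLen {i j : ℕ} (hj : j < i) (h : eval (φ j) = eval (φ i)) :
    Tendsto (matchLen φ i) atTop atTop := by
  refine tendsto_atTop.2 fun n => ?_
  have hagree : ∀ᶠ s in atTop, ∀ x ∈ Finset.range n, evaln s (φ j) x = evaln s (φ i) x :=
    (Finset.eventually_all _).2 fun x _ => eventually_evaln_eq (congrFun h x)
  filter_upwards [eventually_ge_atTop n, hagree] with s hs hagree
  exact Nat.le_findGreatest hs ⟨j, hj, fun x hx => hagree x (Finset.mem_range.2 hx)⟩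

theorem bddAbove_range_matchLen {i : ℕ} (h : ∀ j < i, eval (φ j) ≠ eval (φ i)) :
    BddAbove (Set.range (matchLen φ i)) := by
  choose! x hx using fun j hj => Function.ne_iff.1 (h j hj)
  have hne : ∀ᶠ s in atTop, ∀ j ∈ Finset.range i, evaln s (φ j) (x j) ≠ evaln s (φ i) (x j) :=
    (Finset.eventually_all _).2 fun j hj => eventually_evaln_ne (hx j (Finset.mem_range.1 hj))
  refine IsBoundedUnder.bddAbove_range ⟨(Finset.range i).sup x, eventually_map.2 ?_⟩
  filter_upwards [hne] with s hs
  by_contra! hlt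
  obtain ⟨j, hj, hagree⟩ := Nat.findGreatest_of_ne_zero rfl (Nat.ne_zero_of_lt hlt)
  have hj := Finset.mem_range.2 hj
  exact hs j hj (hagree _ ((Finset.le_sup hj).trans_lt hlt))

theorem exists_restarts_gt {i j : ℕ} (hj : j < i) (h : eval (φ j) = eval (φ i)) (t : ℕ) :
    ∃ s > t, Restarts φ i s :=
  high_scores (tendsto_matchLen hj h) (t + 1)

theorem exists_last_restart {i : ℕ} (h : ∀ j < i, eval (φ j) ≠ eval (φ i)) :
    ∃ t, Restarts φ i t ∧ ∀ s > t, ¬ Restarts φ i s := by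
  have hbdd := bddAbove_range_matchLen h
  obtain ⟨t, ht⟩ := Nat.sSup_mem (Set.range_nonempty _) hbdd
  exact exists_last_record ⟨t, fun s => (le_csSup hbdd ⟨s, rfl⟩).trans ht.ge⟩

theorem primrec_evaln_row (hφ : Primrec φ) :
    Primrec fun q : ℕ × ℕ × ℕ => evaln q.1 (φ q.2.1) q.2.2 :=
  primrec_evaln.comp ((Primrec.fst.pair (hφ.comp (Primrec.fst.comp Primrec.snd))).pair
    (Primrec.snd.comp Primrec.snd))

theorem primrec₂_matchLen (hφ : Primrec φ) : Primrec₂ (matchLen φ) := by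
  have hev := primrec_evaln_row hφ
  have hagree : PrimrecRel fun (x : ℕ) (a : ℕ × ℕ × ℕ) =>
      evaln a.2.2 (φ a.1) x = evaln a.2.2 (φ a.2.1) x := by
    have hj : Primrec fun b : ℕ × ℕ × ℕ × ℕ => b.2.1 := Primrec.fst.comp Primrec.snd
    have hi : Primrec fun b : ℕ × ℕ × ℕ × ℕ => b.2.2.1 :=
      Primrec.fst.comp (Primrec.snd.comp Primrec.snd)
    have hs : Primrec fun b : ℕ × ℕ × ℕ × ℕ => b.2.2.2 :=
      Primrec.snd.comp (Primrec.snd.comp Primrec.snd)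
    exact Primrec.eq.comp (hev.comp (hs.pair (hj.pair Primrec.fst)))
      (hev.comp (hs.pair (hi.pair Primrec.fst)))
  have hbelow : PrimrecRel fun (j : ℕ) (a : (ℕ × ℕ) × ℕ) =>
      ∀ x < a.2, evaln a.1.2 (φ j) x = evaln a.1.2 (φ a.1.1) x :=
    (primrecRel_forall_lt hagree).comp (Primrec.snd.comp Primrec.snd)
      (Primrec.fst.pair (Primrec.fst.comp Primrec.snd))
  have hexists : PrimrecRel fun (a : ℕ × ℕ) (n : ℕ) =>
      ∃ j < a.1, ∀ x < n, evaln a.2 (φ j) x = evaln a.2 (φ a.1) x :=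
    (primrecRel_exists_lt hbelow).comp (Primrec.fst.comp Primrec.fst) Primrec.id
  exact Primrec.nat_findGreatest Primrec.snd hexists

theorem primrecRel_restarts (hφ : Primrec φ) : PrimrecRel (Restarts φ) := by
  have hmatch := primrec₂_matchLen hφ
  have hlt : PrimrecRel fun (r : ℕ) (a : ℕ × ℕ) => matchLen φ a.1 r < matchLen φ a.1 a.2 :=
    Primrec.nat_lt.comp (hmatch.comp (Primrec.fst.comp Primrec.snd) Primrec.fst)
      (hmatch.comp (Primrec.fst.comp Primrec.snd) (Primrec.snd.comp Primrec.snd))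
  exact (primrecRel_forall_lt hlt).comp Primrec.snd Primrec.id

end Restarts

section Followers

/-- Indices of the numbering of nonconstant functions: `inl (i, t)` is the follower of row `i` born
at stage `t`, and `inr (L, k, d)` stands for `extendByConst (L ++ [k]) d`. -/
abbrev Index := (ℕ × ℕ) ⊕ (List ℕ × ℕ × ℕ)

variable (φ : ℕ → Code)

/-- The follower of row `i` born at stage `t` dies at stage `D`, the next restart of the row. -/
def Dies (i t D : ℕ) : Prop :=
  IsLeast {s | t < s ∧ Restarts φ i s} D

/-- The values of row `i` found within `D` steps, with `0` for those not found. The length of the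
list codes `(i, t, D)`, and exceeds all arguments at which a value has been found. -/
def snapshot (i t D : ℕ) : List ℕ :=
  (List.range (encode (i, t, D))).map fun x => (evaln D (φ i) x).getD 0

/-- The output at `x` that the follower of row `i` born at stage `t` suggests at stage `s`: that
of its row, or, at a later restart, the value of the snapshot extended by a `1` and zeros. -/
def followStep (i t x s : ℕ) : Option ℕ :=
  if t < s ∧ Restarts φ i s then some (extendByConst (snapshot φ i t s ++ [1]) 0 x)
  else evaln s (φ i) x

/-- The function with a given index. A follower adopts the first output suggested, so it copies its
row unless it dies. -/
def follow : Index → ℕ →. ℕ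
  | .inl (i, t) => fun x => Nat.rfindOpt (followStep φ i t x)
  | .inr (L, k, d) => (extendByConst (L ++ [k]) d : ℕ → ℕ)

/-- The function with index `inr w` is also that of a follower that dies. -/
def Claimed (w : List ℕ × ℕ × ℕ) : Prop :=
  ∃ i t D, Restarts φ i t ∧ Dies φ i t D ∧ w = (snapshot φ i t D, 1, 0)

/-- The indices that the numbering uses: followers born at a restart of their row, and
non-degenerate unclaimed triples. -/
def Valid : Index → Prop
  | .inl (i, t) => Restarts φ i t
  | .inr w => w.2.1 ≠ w.2.2 ∧ ¬ Claimed φ w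

variable {φ} {i t D : ℕ}

@[simp]
theorem length_snapshot : (snapshot φ i t D).length = encode (i, t, D) := by
  simp [snapshot]

theorem exists_dies_or_forall_not_restarts (i t : ℕ) :
    (∃ D, Dies φ i t D) ∨ ∀ s > t, ¬ Restarts φ i s := by
  rcases {s | t < s ∧ Restarts φ i s}.eq_empty_or_nonempty with h | h
  · exact .inr fun s hts hs => Set.notMem_empty s (h ▸ ⟨hts, hs⟩)
  · exact .inl ⟨_, isLeast_csInf h⟩

theorem extendByConst_snapshot_of_mem_evaln {s x v k d : ℕ} (hs : s ≤ D)
    (hv : v ∈ evaln s (φ i) x) : extendByConst (snapshot φ i t D ++ [k]) d x = v := by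
  have hD : D ≤ encode (i, t, D) := (Nat.right_le_pair t D).trans (Nat.right_le_pair i _)
  have hx : x < encode (i, t, D) := ((evaln_bound hv).trans_le hs).trans_le hD
  have hvD : evaln D (φ i) x = some v := evaln_mono hs hv
  rw [extendByConst, List.getD_append _ _ _ _ (by rwa [length_snapshot]),
    List.getD_eq_getElem _ _ (by rwa [length_snapshot])]
  simp only [snapshot, List.getElem_map, List.getElem_range, hvD, Option.getD_some]

theorem follow_inl_of_dies (hD : Dies φ i t D) :
    follow φ (.inl (i, t)) = (extendByConst (snapshot φ i t D ++ [1]) 0 : ℕ → ℕ) := by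
  funext x
  refine Part.eq_some_iff.2 ?_
  have hstep : followStep φ i t x D = some (extendByConst (snapshot φ i t D ++ [1]) 0 x) :=
    if_pos hD.1
  obtain ⟨s, hsD, v, hvs, hv⟩ := exists_mem_rfindOpt_of_isSome (Option.isSome_of_eq_some hstep)
  suffices hval : extendByConst (snapshot φ i t D ++ [1]) 0 x = v from hval ▸ hv
  rw [followStep] at hvs
  split_ifs at hvs with hs
  · obtain rfl : s = D := le_antisymm hsD (hD.2 hs)
    exact Option.some_inj.1 hvs
  · exact extendByConst_snapshot_of_mem_evaln hsD hvs

theorem follow_inl_of_forall_not_restarts (h : ∀ s > t, ¬ Restarts φ i s) :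
    follow φ (.inl (i, t)) = eval (φ i) := by
  funext x
  rw [eval_eq_rfindOpt]
  exact congrArg Nat.rfindOpt (funext fun s => if_neg fun hs => h s hs.1 hs.2)

theorem eq_of_snapshot_eq {i' t' D' : ℕ} (h : snapshot φ i t D = snapshot φ i' t' D') :
    (i, t, D) = (i', t', D') :=
  encode_injective (by rw [← length_snapshot (φ := φ), h, length_snapshot])

theorem existsUnique_follow_eq_eval (hφ : ∀ i, ¬ TotalEventuallyConst (eval (φ i))) (i : ℕ) :
    ∃! x, Valid φ x ∧ follow φ x = eval (φ i) := by
  classical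
  obtain ⟨m, hm, hmin⟩ : ∃ m, eval (φ m) = eval (φ i) ∧ ∀ j < m, eval (φ j) ≠ eval (φ i) :=
    have h : ∃ m, eval (φ m) = eval (φ i) := ⟨i, rfl⟩
    ⟨Nat.find h, Nat.find_spec h, fun _ => Nat.find_min h⟩
  obtain ⟨t, ht, hlast⟩ := exists_last_restart (hm ▸ hmin)
  refine ⟨.inl (m, t), ⟨ht, (follow_inl_of_forall_not_restarts hlast).trans hm⟩, ?_⟩
  rintro (⟨j, u⟩ | ⟨L, k, d⟩) ⟨hvalid, hfollow⟩
  · rcases exists_dies_or_forall_not_restarts j u with ⟨D, hD⟩ | hlast'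
    · rw [follow_inl_of_dies hD] at hfollow
      exact absurd (hfollow ▸ totalEventuallyConst_extendByConst _ _) (hφ i)
    rw [follow_inl_of_forall_not_restarts hlast'] at hfollow
    obtain rfl : j = m := by
      refine le_antisymm (not_lt.1 fun hlt => ?_) (not_lt.1 fun hlt => hmin j hlt hfollow)
      obtain ⟨s, hs, hrestart⟩ := exists_restarts_gt hlt (hm.trans hfollow.symm) u
      exact hlast' s hs hrestart
    obtain rfl : u = t :=
      le_antisymm (not_lt.1 fun h => hlast u h hvalid) (not_lt.1 fun h => hlast' t h ht)
    rfl
  · exact absurd (hfollow ▸ totalEventuallyConst_extendByConst _ _) (hφ i)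

theorem follow_inl_eq_extendByConst_iff (hφ : ∀ i, ¬ TotalEventuallyConst (eval (φ i)))
    {L : List ℕ} {k d : ℕ} (hk : k ≠ d) :
    follow φ (.inl (i, t)) = (extendByConst (L ++ [k]) d : ℕ → ℕ) ↔
      ∃ D, Dies φ i t D ∧ (L, k, d) = (snapshot φ i t D, 1, 0) := by
  constructor
  · intro h
    rcases exists_dies_or_forall_not_restarts (φ := φ) i t with ⟨D, hD⟩ | hlast
    · rw [follow_inl_of_dies hD] at h
      exact ⟨D, hD, (eq_of_extendByConst_append_eq one_ne_zero hk (PFun.lift_injective h)).symm⟩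
    · rw [follow_inl_of_forall_not_restarts hlast] at h
      exact absurd (h ▸ totalEventuallyConst_extendByConst _ _) (hφ i)
  · rintro ⟨D, hD, heq⟩
    obtain ⟨rfl, rfl, rfl⟩ : L = _ ∧ k = 1 ∧ d = 0 := by simpa using heq
    exact follow_inl_of_dies hD

theorem existsUnique_follow_eq_extendByConst (hφ : ∀ i, ¬ TotalEventuallyConst (eval (φ i)))
    {L : List ℕ} {k d : ℕ} (hk : k ≠ d) :
    ∃! x, Valid φ x ∧ follow φ x = (extendByConst (L ++ [k]) d : ℕ → ℕ) := by
  by_cases hclaimed : Claimed φ (L, k, d)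
  · obtain ⟨i, t, D, ht, hD, hw⟩ := id hclaimed
    refine ⟨.inl (i, t), ⟨ht, (follow_inl_eq_extendByConst_iff hφ hk).2 ⟨D, hD, hw⟩⟩, ?_⟩
    rintro (⟨j, u⟩ | ⟨L', k', d'⟩) ⟨hvalid, hfollow⟩
    · obtain ⟨D', -, hw'⟩ := (follow_inl_eq_extendByConst_iff hφ hk).1 hfollow
      obtain ⟨rfl, rfl, -⟩ : j = i ∧ u = t ∧ D' = D := by
        simpa only [Prod.mk.injEq] using
          eq_of_snapshot_eq (congrArg Prod.fst (hw'.symm.trans hw))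
      rfl
    · have heq := eq_of_extendByConst_append_eq hvalid.1 hk (PFun.lift_injective hfollow)
      exact absurd (heq ▸ hclaimed) hvalid.2
  · refine ⟨.inr (L, k, d), ⟨⟨hk, hclaimed⟩, rfl⟩, ?_⟩
    rintro (⟨i, t⟩ | ⟨L', k', d'⟩) ⟨hvalid, hfollow⟩
    · obtain ⟨D, hD, hw⟩ := (follow_inl_eq_extendByConst_iff hφ hk).1 hfollow
      exact absurd ⟨i, t, D, hvalid, hD, hw⟩ hclaimed
    · rw [eq_of_extendByConst_append_eq hvalid.1 hk (PFun.lift_injective hfollow)]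

theorem follow_ne_const (hφ : ∀ i, ¬ TotalEventuallyConst (eval (φ i))) {x : Index}
    (hx : Valid φ x) (e : ℕ) : follow φ x ≠ fun _ => Part.some e := by
  intro h
  rcases x with ⟨i, t⟩ | ⟨L, k, d⟩
  · rcases exists_dies_or_forall_not_restarts (φ := φ) i t with ⟨D, hD⟩ | hlast
    · rw [follow_inl_of_dies hD] at h
      exact extendByConst_append_ne_const one_ne_zero e (PFun.lift_injective h)
    · rw [follow_inl_of_forall_not_restarts hlast] at h
      exact hφ i ⟨_, h, .const e⟩
  · exact extendByConst_append_ne_const hx.1 e (PFun.lift_injective h)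

theorem existsUnique_follow_eq (hφ : ∀ i, ¬ TotalEventuallyConst (eval (φ i)))
    (hsurj : ∀ f : ℕ →. ℕ, Partrec f → ¬ TotalEventuallyConst f → ∃ i, eval (φ i) = f)
    {f : ℕ →. ℕ} (hf : Partrec f) (hconst : ∀ e : ℕ, f ≠ fun _ => Part.some e) :
    ∃! x, Valid φ x ∧ follow φ x = f := by
  by_cases hev : TotalEventuallyConst f
  · obtain ⟨g, rfl, hg⟩ := hev
    obtain ⟨e, rfl⟩ | ⟨L, k, d, hk, rfl⟩ := exists_eq_extendByConst_append hg
    · exact absurd rfl (hconst e)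
    · exact existsUnique_follow_eq_extendByConst hφ hk
  · obtain ⟨i, rfl⟩ := hsurj f hf hev
    exact existsUnique_follow_eq_eval hφ i

end Followers

section Computability

variable {φ : ℕ → Code}

theorem primrec_snapshot (hφ : Primrec φ) :
    Primrec fun q : ℕ × ℕ × ℕ => snapshot φ q.1 q.2.1 q.2.2 := by
  have hD : Primrec fun a : (ℕ × ℕ × ℕ) × ℕ => a.1.2.2 :=
    Primrec.snd.comp (Primrec.snd.comp Primrec.fst)
  have hvalue : Primrec₂ fun (q : ℕ × ℕ × ℕ) (x : ℕ) => (evaln q.2.2 (φ q.1) x).getD 0 :=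
    Primrec.option_getD.comp ((primrec_evaln_row hφ).comp
      (hD.pair ((Primrec.fst.comp Primrec.fst).pair Primrec.snd))) (Primrec.const 0)
  exact Primrec.list_map (Primrec.list_range.comp Primrec.encode) hvalue

theorem primrecPred_dies (hφ : Primrec φ) :
    PrimrecPred fun q : ℕ × ℕ × ℕ => Dies φ q.1 q.2.1 q.2.2 := by
  have hrestarts := primrecRel_restarts hφ
  have hlater : PrimrecRel fun (s : ℕ) (q : ℕ × ℕ × ℕ) => q.2.1 < s ∧ Restarts φ q.1 s :=
    (Primrec.nat_lt.comp (Primrec.fst.comp (Primrec.snd.comp Primrec.snd)) Primrec.fst).and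
      (hrestarts.comp (Primrec.fst.comp Primrec.snd) Primrec.fst)
  have hD : Primrec fun q : ℕ × ℕ × ℕ => q.2.2 := Primrec.snd.comp Primrec.snd
  refine ((hlater.comp hD Primrec.id).and
    ((primrecRel_forall_lt hlater.not).comp hD Primrec.id)).of_eq fun q => ?_
  refine and_congr_right fun _ => forall_congr' fun s => ?_
  exact ⟨fun h hs => not_lt.1 fun hlt => h hlt hs, fun h hlt hs => hlt.not_ge (h hs)⟩

theorem primrecPred_claimed (hφ : Primrec φ) : PrimrecPred (Claimed φ) := by
  have hdeath : Primrec fun w : List ℕ × ℕ × ℕ => Denumerable.ofNat (ℕ × ℕ × ℕ) w.1.length :=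
    (Primrec.ofNat _).comp (Primrec.list_length.comp Primrec.fst)
  have hclaims : PrimrecRel fun (q : ℕ × ℕ × ℕ) (w : List ℕ × ℕ × ℕ) => Restarts φ q.1 q.2.1 ∧
      Dies φ q.1 q.2.1 q.2.2 ∧ w = (snapshot φ q.1 q.2.1 q.2.2, 1, 0) :=
    ((primrecRel_restarts hφ).comp (Primrec.fst.comp Primrec.fst)
        (Primrec.fst.comp (Primrec.snd.comp Primrec.fst))).and
      (((primrecPred_dies hφ).comp Primrec.fst).and (Primrec.eq.comp Primrec.snd
        (((primrec_snapshot hφ).comp Primrec.fst).pair (Primrec.const (1, 0)))))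
  refine (hclaims.comp hdeath Primrec.id).of_eq fun w => ⟨fun h => ⟨_, _, _, h⟩, ?_⟩
  rintro ⟨i, t, D, h⟩
  have hq : Denumerable.ofNat (ℕ × ℕ × ℕ) w.1.length = (i, t, D) := by
    rw [h.2.2, length_snapshot, Denumerable.ofNat_encode]
  simpa only [hq, id] using h

theorem primrecPred_valid (hφ : Primrec φ) : PrimrecPred (Valid φ) := by
  classical
  have hfollower : PrimrecPred fun q : ℕ × ℕ => Restarts φ q.1 q.2 := primrecRel_restarts hφ
  have htriple : PrimrecPred fun w : List ℕ × ℕ × ℕ => w.2.1 ≠ w.2.2 ∧ ¬ Claimed φ w :=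
    (Primrec.eq.comp (Primrec.fst.comp Primrec.snd)
      (Primrec.snd.comp Primrec.snd)).not.and (primrecPred_claimed hφ).not
  refine Primrec.primrecPred ((Primrec.sumCasesOn Primrec.id
    (hfollower.decide.comp Primrec.snd).to₂
    (htriple.decide.comp Primrec.snd).to₂).of_eq fun x => ?_)
  cases x <;> exact decide_eq_decide.2 Iff.rfl

theorem partrec₂_follow (hφ : Primrec φ) : Partrec₂ (follow φ) := by
  have hi : Primrec fun a : (ℕ × ℕ × ℕ) × ℕ => a.1.1 := Primrec.fst.comp Primrec.fst
  have ht : Primrec fun a : (ℕ × ℕ × ℕ) × ℕ => a.1.2.1 :=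
    Primrec.fst.comp (Primrec.snd.comp Primrec.fst)
  have hx : Primrec fun a : (ℕ × ℕ × ℕ) × ℕ => a.1.2.2 :=
    Primrec.snd.comp (Primrec.snd.comp Primrec.fst)
  have hext : Primrec fun a : (List ℕ × ℕ × ℕ) × ℕ =>
      extendByConst (a.1.1 ++ [a.1.2.1]) a.1.2.2 a.2 :=
    primrec_extendByConst.comp (((Primrec.list_append.comp (Primrec.fst.comp Primrec.fst)
      (Primrec.list_cons.comp (Primrec.fst.comp (Primrec.snd.comp Primrec.fst))
        (Primrec.const []))).pair (Primrec.snd.comp (Primrec.snd.comp Primrec.fst))).pair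
      Primrec.snd)
  have hstep : Primrec₂ fun (q : ℕ × ℕ × ℕ) (s : ℕ) => followStep φ q.1 q.2.1 q.2.2 s :=
    Primrec.ite
      ((Primrec.nat_lt.comp ht Primrec.snd).and ((primrecRel_restarts hφ).comp hi Primrec.snd))
      (Primrec.option_some.comp (hext.comp ((((primrec_snapshot hφ).comp
        (hi.pair (ht.pair Primrec.snd))).pair (Primrec.const (1, 0))).pair hx)))
      ((primrec_evaln_row hφ).comp (Primrec.snd.pair (hi.pair hx)))
  have hfollower : Partrec fun q : ℕ × ℕ × ℕ => Nat.rfindOpt (followStep φ q.1 q.2.1 q.2.2) :=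
    Partrec.rfindOpt hstep.to_comp
  have hinl : Computable fun a : (Index × ℕ) × (ℕ × ℕ) => (a.2.1, a.2.2, a.1.2) :=
    (Computable.fst.comp Computable.snd).pair
      ((Computable.snd.comp Computable.snd).pair (Computable.snd.comp Computable.fst))
  have hinr : Computable fun a : (Index × ℕ) × (List ℕ × ℕ × ℕ) => (a.2, a.1.2) :=
    Computable.snd.pair (Computable.snd.comp Computable.fst)
  refine (Partrec.sumCasesOn Computable.fst (hfollower.comp hinl).to₂
    (hext.to_comp.comp hinr).partrec.to₂).of_eq fun a => ?_
  rcases a with ⟨⟨i, t⟩ | ⟨L, k, d⟩, x⟩ <;> rfl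

end Computability

section Numbering

variable {φ : ℕ → Code}

theorem infinite_valid : Infinite {x // Valid φ x} := by
  have hvalid (n : ℕ) : Valid φ (.inr (List.replicate n 0, 0, 1)) := by
    refine ⟨zero_ne_one, ?_⟩
    rintro ⟨i, t, D, -, -, hw⟩
    simp at hw
  refine Infinite.of_injective (fun n => ⟨_, hvalid n⟩) fun m n hmn => ?_
  simpa using hmn

theorem exists_injective_numbering_nonconst : ∃ μ : ℕ → ℕ →. ℕ, Partrec₂ μ ∧
    Function.Injective μ ∧
    Set.range μ = {f | Partrec f ∧ ∀ d : ℕ, f ≠ fun _ => Part.some d} := by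
  classical
  obtain ⟨φ, hφ, hrow, hsurj⟩ := exists_primrec_codes_not_totalEventuallyConst
  let _ : Primcodable {x // Valid φ x} := Primcodable.subtype (primrecPred_valid hφ)
  have := infinite_valid (φ := φ)
  obtain ⟨e, he, hbij⟩ := exists_computable_bijective {x // Valid φ x}
  have hfollow (x : {x // Valid φ x}) :
      Partrec (follow φ x) ∧ ∀ d : ℕ, follow φ x ≠ fun _ => Part.some d :=
    ⟨(partrec₂_follow hφ).comp (Computable.const x.1) Computable.id, follow_ne_const hrow x.2⟩
  refine ⟨fun n => follow φ (e n), ?_, fun m n hmn => ?_, Set.Subset.antisymm ?_ ?_⟩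
  · exact (partrec₂_follow hφ).comp
      ((Primrec.subtype_val.to_comp.comp he).comp Computable.fst) Computable.snd
  · obtain ⟨hpart, hconst⟩ := hfollow (e n)
    obtain ⟨x, -, hx⟩ := existsUnique_follow_eq hrow hsurj hpart hconst
    exact hbij.1 (Subtype.ext ((hx _ ⟨(e m).2, hmn⟩).trans (hx _ ⟨(e n).2, rfl⟩).symm))
  · rintro _ ⟨n, rfl⟩
    exact hfollow (e n)
  · rintro f ⟨hpart, hconst⟩
    obtain ⟨x, ⟨hx, rfl⟩, -⟩ := existsUnique_follow_eq hrow hsurj hpart hconst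
    exact (hbij.2 ⟨x, hx⟩).imp fun n hn => congrArg (fun y => follow φ y.1) hn

end Numbering

end FriedbergNumbering

open FriedbergNumbering

/-- There is a computable 1-1 enumeration of all unary partial computable
functions with `ψ_{2x+1}(y) = x` for all `x`, `y`. -/
theorem exists_friedberg_numbering_fixing_constants :
    ∃ ψ : ℕ → ℕ →. ℕ,
      Partrec₂ ψ ∧
      (∀ f : ℕ →. ℕ, Partrec f → ∃ x : ℕ, ψ x = f) ∧
      Function.Injective ψ ∧
      ∀ x y : ℕ, ψ (2 * x + 1) y = Part.some x := by
  obtain ⟨μ, hμ, hμinj, hrange⟩ := exists_injective_numbering_nonconst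
  let κ : ℕ → ℕ →. ℕ := fun e _ => Part.some e
  have hκ : Partrec₂ κ := Computable.fst.partrec
  have hκinj : Function.Injective κ := fun _ _ h => Part.some_inj.1 (congrFun h 0)
  refine ⟨interleave μ κ, partrec₂_interleave hμ hκ, fun f hf => ?_,
    interleave_injective hμinj hκinj fun m => (hrange.le ⟨m, rfl⟩).2,
    fun x y => by rw [interleave_odd]⟩
  suffices f ∈ Set.range μ ∪ Set.range κ from (range_interleave μ κ).ge this
  by_cases hconst : ∃ e, κ e = f
  · exact .inr hconst
  · exact .inl (hrange.ge ⟨hf, fun e he => hconst ⟨e, he.symm⟩⟩)
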